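/- Define Q_α(ρ,σ) = tr((σ^{(1−α)/(2α)} ρ σ^{(1−α)/(2α)})^α) for positive definite matrices ρ, σ. For 1/2 ≤ α < 1, Q_α is jointly concave on pairs of positive definite matrices. -/

import Mathlib

open Matrix ComplexOrder

/-- Functional calculus for Hermitian matrices: apply `f` to the eigenvalues. -/
noncomputable def mfun {m : Type*} [Fintype m] [DecidableEq m] (f : ℝ → ℝ)
    (A : Matrix m m ℂ) : Matrix m m ℂ :=
  if hA : A.IsHermitian then
    (hA.eigenvectorUnitary : Matrix m m ℂ) *
      Matrix.diagonal (fun i => (f (hA.eigenvalues i) : ℂ)) *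
      (star (hA.eigenvectorUnitary : Matrix m m ℂ))
  else 0

/-- Real matrix power via the functional calculus. -/
noncomputable def mpow {m : Type*} [Fintype m] [DecidableEq m]
    (A : Matrix m m ℂ) (p : ℝ) : Matrix m m ℂ :=
  mfun (fun x => x ^ p) A


section helpers
variable {m : Type*} [Fintype m] [DecidableEq m]

lemma mfun_eq_cfc (f : ℝ → ℝ) {A : Matrix m m ℂ} (hA : A.IsHermitian) : mfun f A = cfc f A := by
  rw [hA.cfc_eq, Matrix.IsHermitian.cfc, mfun, dif_pos hA]
  rfl

lemma mcont (f : ℝ → ℝ) (A : Matrix m m ℂ) : ContinuousOn f (spectrum ℝ A) :=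
  Matrix.finite_real_spectrum.continuousOn f

lemma mfun_herm (f : ℝ → ℝ) {A : Matrix m m ℂ} (hA : A.IsHermitian) : (mfun f A).IsHermitian := by
  rw [mfun_eq_cfc f hA]
  exact cfc_predicate f A

lemma mfun_mul (f g : ℝ → ℝ) {A : Matrix m m ℂ} (hA : A.IsHermitian) :
    mfun f A * mfun g A = mfun (fun x => f x * g x) A := by
  rw [mfun_eq_cfc f hA, mfun_eq_cfc g hA, mfun_eq_cfc _ hA, cfc_mul f g A (mcont f A) (mcont g A)]

lemma mfun_comp (f g : ℝ → ℝ) {A : Matrix m m ℂ} (hA : A.IsHermitian) :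
    mfun g (mfun f A) = mfun (fun x => g (f x)) A := by
  rw [mfun_eq_cfc g (mfun_herm f hA), mfun_eq_cfc f hA, mfun_eq_cfc _ hA]
  exact (cfc_comp' g f A ((Matrix.finite_real_spectrum.image f).continuousOn g) (mcont f A) hA).symm

lemma mfun_congr {f g : ℝ → ℝ} {A : Matrix m m ℂ} (hA : A.PosDef) (h : ∀ x, 0 < x → f x = g x) :
    mfun f A = mfun g A := by
  simp only [mfun, dif_pos hA.1]
  simp only [h _ (hA.eigenvalues_pos _)]

lemma mfun_id {A : Matrix m m ℂ} (hA : A.IsHermitian) : mfun (fun x => x) A = A := by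
  rw [mfun_eq_cfc _ hA]; exact cfc_id' ℝ A hA

lemma mfun_one {A : Matrix m m ℂ} (hA : A.IsHermitian) : mfun (fun _ => 1) A = 1 := by
  rw [mfun_eq_cfc _ hA]; exact cfc_const_one ℝ A hA

lemma mfun_posDef {f : ℝ → ℝ} {A : Matrix m m ℂ} (hA : A.PosDef) (h : ∀ x, 0 < x → 0 < f x) :
    (mfun f A).PosDef := by
  rw [mfun, dif_pos hA.1]
  rw [Matrix.IsUnit.posDef_star_right_conjugate_iff Unitary.isUnit_coe, Matrix.posDef_diagonal_iff]
  intro i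
  exact_mod_cast h _ (hA.eigenvalues_pos i)

lemma mpow_posDef {A : Matrix m m ℂ} (hA : A.PosDef) (p : ℝ) : (mpow A p).PosDef :=
  mfun_posDef hA fun _ hx => Real.rpow_pos_of_pos hx p

lemma mpow_mul {A : Matrix m m ℂ} (hA : A.PosDef) (p q : ℝ) :
    mpow A p * mpow A q = mpow A (p + q) := by
  rw [mpow, mpow, mfun_mul _ _ hA.1]
  exact mfun_congr hA fun x hx => (Real.rpow_add hx p q).symm

lemma mpow_mpow {A : Matrix m m ℂ} (hA : A.PosDef) (p q : ℝ) :
    mpow (mpow A p) q = mpow A (p * q) := by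
  rw [mpow, mpow, mfun_comp _ _ hA.1]
  exact mfun_congr hA fun x hx => (Real.rpow_mul hx.le p q).symm

lemma mpow_one {A : Matrix m m ℂ} (hA : A.PosDef) : mpow A 1 = A := by
  simp only [mpow, Real.rpow_one]; exact mfun_id hA.1

lemma mpow_zero {A : Matrix m m ℂ} (hA : A.PosDef) : mpow A 0 = 1 := by
  simp only [mpow, Real.rpow_zero]; exact mfun_one hA.1

lemma mpow_neg_one {A : Matrix m m ℂ} (hA : A.PosDef) : mpow A (-1) = A⁻¹ := by
  symm
  apply Matrix.inv_eq_right_inv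
  nth_rw 1 [← mpow_one hA]
  rw [mpow_mul hA]; simp [mpow_zero hA]

lemma trace_mfun (f : ℝ → ℝ) {A : Matrix m m ℂ} (hA : A.IsHermitian) :
    (mfun f A).trace = (A.charpoly.roots.map (fun z : ℂ => (f z.re : ℂ))).sum := by
  rw [hA.roots_charpoly_eq_eigenvalues, mfun, dif_pos hA, Matrix.trace_mul_cycle]
  simp [Matrix.trace]

/-- cyclicity -/
lemma trace_mfun_cycle (f : ℝ → ℝ) (K : Matrix m m ℂ) :
    (mfun f (K * Kᴴ)).trace = (mfun f (Kᴴ * K)).trace := by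
  rw [trace_mfun f (Matrix.isHermitian_mul_conjTranspose_self K),
    trace_mfun f (Matrix.isHermitian_conjTranspose_mul_self K), Matrix.charpoly_mul_comm]

/-- the matrix of `K` in eigenbases -/
noncomputable def ker {A B : Matrix m m ℂ} (hA : A.IsHermitian) (hB : B.IsHermitian)
    (K : Matrix m m ℂ) : Matrix m m ℂ :=
  star (hA.eigenvectorUnitary : Matrix m m ℂ) * K * (hB.eigenvectorUnitary : Matrix m m ℂ)

lemma trace_expand {A B : Matrix m m ℂ} (hA : A.IsHermitian) (hB : B.IsHermitian)
    (K : Matrix m m ℂ) (f g : ℝ → ℝ) :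
    (Kᴴ * mfun f A * K * mfun g B).trace.re =
      ∑ i, ∑ j, f (hA.eigenvalues i) * g (hB.eigenvalues j) * Complex.normSq (ker hA hB K i j) := by
  have h : (Kᴴ * mfun f A * K * mfun g B).trace =
      ((ker hA hB K)ᴴ * diagonal (fun i => (f (hA.eigenvalues i) : ℂ)) * ker hA hB K *
        diagonal (fun i => (g (hB.eigenvalues i) : ℂ))).trace := by
    rw [mfun, dif_pos hA, mfun, dif_pos hB]
    simp only [ker, Matrix.conjTranspose_mul, Matrix.star_eq_conjTranspose,
      Matrix.conjTranspose_conjTranspose]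
    conv_lhs => rw [← Matrix.mul_assoc, Matrix.trace_mul_comm]
    simp only [Matrix.mul_assoc]
  rw [h, Finset.sum_comm]
  simp only [Matrix.trace, Matrix.diag, Matrix.mul_diagonal, Complex.re_sum]
  refine Finset.sum_congr rfl fun j _ => ?_
  rw [Matrix.mul_apply, Finset.sum_mul, Complex.re_sum]
  refine Finset.sum_congr rfl fun i _ => ?_
  rw [Matrix.mul_diagonal, Matrix.conjTranspose_apply]
  simp only [Complex.normSq_apply, Complex.mul_re, Complex.mul_im, Complex.ofReal_re,
    Complex.ofReal_im, Complex.star_def, Complex.conj_re, Complex.conj_im]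
  ring

lemma trace_mfun_left {A B : Matrix m m ℂ} (hA : A.IsHermitian) (hB : B.IsHermitian)
    (f : ℝ → ℝ) :
    (mfun f A).trace.re =
      ∑ i, ∑ j, f (hA.eigenvalues i) * Complex.normSq (ker hA hB 1 i j) := by
  have := trace_expand hA hB 1 f (fun _ => 1)
  rw [mfun_one hB] at this
  simpa using this

lemma trace_mfun_right {A B : Matrix m m ℂ} (hA : A.IsHermitian) (hB : B.IsHermitian)
    (g : ℝ → ℝ) :
    (mfun g B).trace.re =
      ∑ i, ∑ j, g (hB.eigenvalues j) * Complex.normSq (ker hA hB 1 i j) := by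
  have := trace_expand hA hB 1 (fun _ => 1) g
  rw [mfun_one hA] at this
  simpa using this

lemma trace_mfun_both {A B : Matrix m m ℂ} (hA : A.IsHermitian) (hB : B.IsHermitian)
    (f g : ℝ → ℝ) :
    (mfun f A * mfun g B).trace.re =
      ∑ i, ∑ j, f (hA.eigenvalues i) * g (hB.eigenvalues j) *
        Complex.normSq (ker hA hB 1 i j) := by
  simpa using trace_expand hA hB 1 f g

lemma young1 {X W : Matrix m m ℂ} (hX : X.PosDef) (hW : W.PosDef) {α : ℝ} (h0 : 0 < α)
    (h1 : α < 1) :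
    (mpow X α).trace.re ≤ α * (X * W⁻¹).trace.re + (1 - α) * (mpow W (α / (1 - α))).trace.re := by
  have e := trace_mfun_both hX.1 hW.1 (fun x => x) (fun x => x ^ (-1 : ℝ))
  rw [mfun_id hX.1, show mfun (fun x => x ^ (-1 : ℝ)) W = W⁻¹ from mpow_neg_one hW] at e
  rw [e, mpow, mpow, trace_mfun_left hX.1 hW.1, trace_mfun_right hX.1 hW.1]
  simp only [Finset.mul_sum, ← Finset.sum_add_distrib]
  refine Finset.sum_le_sum fun i _ => Finset.sum_le_sum fun j _ => ?_
  have hx := hX.eigenvalues_pos i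
  have hw := hW.eigenvalues_pos j
  set x := hX.1.eigenvalues i
  set w := hW.1.eigenvalues j
  have key : x ^ α ≤ α * (x * w ^ (-1 : ℝ)) + (1 - α) * w ^ (α / (1 - α)) := by
    have := Real.geom_mean_le_arith_mean2_weighted h0.le (sub_nonneg.2 h1.le)
      (p₁ := x * w ^ (-1 : ℝ)) (p₂ := w ^ (α / (1 - α))) (by positivity) (by positivity) (by ring)
    refine le_trans (le_of_eq ?_) this
    rw [Real.mul_rpow hx.le (by positivity), ← Real.rpow_mul hw.le, ← Real.rpow_mul hw.le, mul_assoc,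
      ← Real.rpow_add hw, div_mul_cancel₀ _ (by linarith)]
    simp
  have := mul_le_mul_of_nonneg_right key (Complex.normSq_nonneg (ker hX.1 hW.1 1 i j))
  linarith

lemma young2 {X Z : Matrix m m ℂ} (hX : X.PosDef) (hZ : Z.PosDef) {p : ℝ} (h0 : 0 < p)
    (h1 : p < 1) :
    (X * mpow Z (1 - p)).trace.re - (1 - p) * Z.trace.re ≤ p * (mpow X p⁻¹).trace.re := by
  have e := trace_mfun_both hX.1 hZ.1 (fun x => x) (fun x => x ^ (1 - p))
  have e2 := trace_mfun_right hX.1 hZ.1 (fun x => x)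
  rw [mfun_id hX.1] at e
  rw [mfun_id hZ.1] at e2
  rw [mpow, e, e2, mpow, trace_mfun_left hX.1 hZ.1, sub_le_iff_le_add]
  simp only [Finset.mul_sum, ← Finset.sum_add_distrib]
  refine Finset.sum_le_sum fun i _ => Finset.sum_le_sum fun j _ => ?_
  have hx := hX.eigenvalues_pos i
  have hw := hZ.eigenvalues_pos j
  set x := hX.1.eigenvalues i
  set w := hZ.1.eigenvalues j
  have key : x * w ^ (1 - p) ≤ p * x ^ p⁻¹ + (1 - p) * w := by
    have := Real.geom_mean_le_arith_mean2_weighted h0.le (sub_nonneg.2 h1.le)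
      (p₁ := x ^ p⁻¹) (p₂ := w) (by positivity) (by positivity) (by ring)
    refine le_trans (le_of_eq ?_) this
    rw [← Real.rpow_mul hx.le, inv_mul_cancel₀ h0.ne', Real.rpow_one]
  have := mul_le_mul_of_nonneg_right key (Complex.normSq_nonneg (ker hX.1 hZ.1 1 i j))
  linarith


lemma scalar_par {a b : ℝ} (ha : 0 < a) (hb : 0 < b) (k z : ℂ) :
    a * b / (a + b) * Complex.normSq k ≤ a * Complex.normSq z + b * Complex.normSq (k - z) := by
  have hab : 0 < a + b := by positivity
  rw [div_mul_eq_mul_div, div_le_iff₀ hab]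
  have h1 := sq_nonneg (a * z.re - b * (k.re - z.re))
  have h2 := sq_nonneg (a * z.im - b * (k.im - z.im))
  simp only [Complex.normSq_apply, Complex.sub_re, Complex.sub_im]
  nlinarith

lemma scalar_par_eq {a b : ℝ} (ha : 0 < a) (hb : 0 < b) (k : ℂ) :
    a * Complex.normSq (k * ((b / (a + b) : ℝ) : ℂ)) +
      b * Complex.normSq (k - k * ((b / (a + b) : ℝ) : ℂ)) = a * b / (a + b) * Complex.normSq k := by
  have hab : a + b ≠ 0 := by positivity
  simp only [Complex.normSq_apply, Complex.sub_re, Complex.sub_im, Complex.mul_re, Complex.mul_im,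
    Complex.ofReal_re, Complex.ofReal_im]
  field_simp
  ring

/-- affine functional whose infimum over `M` is the parallel sum form -/
noncomputable def aff (s : ℝ) (K M A B : Matrix m m ℂ) : ℝ :=
  s * (Mᴴ * A * M).trace.re + ((K - M)ᴴ * (K - M) * B).trace.re

lemma aff_eq {A B : Matrix m m ℂ} (hA : A.IsHermitian) (hB : B.IsHermitian) (s : ℝ)
    (K M : Matrix m m ℂ) :
    aff s K M A B = ∑ i, ∑ j, (s * hA.eigenvalues i * Complex.normSq (ker hA hB M i j) +
      hB.eigenvalues j * Complex.normSq (ker hA hB K i j - ker hA hB M i j)) := by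
  have e1 := trace_expand hA hB M (fun x => x) (fun _ => 1)
  have e2 := trace_expand hA hB (K - M) (fun _ => 1) (fun x => x)
  rw [mfun_id hA, mfun_one hB, Matrix.mul_one] at e1
  rw [mfun_id hB, mfun_one hA, Matrix.mul_one] at e2
  have e3 : ker hA hB (K - M) = ker hA hB K - ker hA hB M := by
    simp [ker, Matrix.mul_sub, Matrix.sub_mul]
  rw [aff, e1, e2, e3]
  simp only [Finset.mul_sum, ← Finset.sum_add_distrib]
  refine Finset.sum_congr rfl fun i _ => Finset.sum_congr rfl fun j _ => ?_
  simp only [Matrix.sub_apply]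
  ring

/-- parallel sum form -/
noncomputable def par {A B : Matrix m m ℂ} (hA : A.IsHermitian) (hB : B.IsHermitian) (s : ℝ)
    (K : Matrix m m ℂ) : ℝ :=
  ∑ i, ∑ j, (s * hA.eigenvalues i) * hB.eigenvalues j / (s * hA.eigenvalues i + hB.eigenvalues j) *
    Complex.normSq (ker hA hB K i j)

lemma par_le {A B : Matrix m m ℂ} (hA : A.PosDef) (hB : B.PosDef) {s : ℝ} (hs : 0 < s)
    (K M : Matrix m m ℂ) : par hA.1 hB.1 s K ≤ aff s K M A B := by
  rw [aff_eq hA.1 hB.1, par]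
  refine Finset.sum_le_sum fun i _ => Finset.sum_le_sum fun j _ => ?_
  exact scalar_par (mul_pos hs (hA.eigenvalues_pos i)) (hB.eigenvalues_pos j) _ _

lemma ker_surj {A B : Matrix m m ℂ} (hA : A.IsHermitian) (hB : B.IsHermitian)
    (N : Matrix m m ℂ) : ∃ M, ker hA hB M = N := by
  refine ⟨(hA.eigenvectorUnitary : Matrix m m ℂ) * N *
    star (hB.eigenvectorUnitary : Matrix m m ℂ), ?_⟩
  rw [ker]
  calc _ = (star (hA.eigenvectorUnitary : Matrix m m ℂ) * (hA.eigenvectorUnitary : Matrix m m ℂ)) *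
        N * (star (hB.eigenvectorUnitary : Matrix m m ℂ) *
          (hB.eigenvectorUnitary : Matrix m m ℂ)) := by simp only [Matrix.mul_assoc]
    _ = N := by simp

lemma par_attained {A B : Matrix m m ℂ} (hA : A.PosDef) (hB : B.PosDef) {s : ℝ} (hs : 0 < s)
    (K : Matrix m m ℂ) : ∃ M, aff s K M A B = par hA.1 hB.1 s K := by
  obtain ⟨M, hM⟩ := ker_surj hA.1 hB.1 (fun i j => ker hA.1 hB.1 K i j *
    ((hB.1.eigenvalues j / (s * hA.1.eigenvalues i + hB.1.eigenvalues j) : ℝ) : ℂ))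
  refine ⟨M, ?_⟩
  rw [aff_eq hA.1 hB.1, par, hM]
  refine Finset.sum_congr rfl fun i _ => Finset.sum_congr rfl fun j _ => ?_
  exact scalar_par_eq (mul_pos hs (hA.eigenvalues_pos i)) (hB.eigenvalues_pos j) _

/-- convex combination -/
noncomputable def mix (w : ℝ) (A B : Matrix m m ℂ) : Matrix m m ℂ :=
  ((1 - w : ℝ) : ℂ) • A + ((w : ℝ) : ℂ) • B

lemma mix_posDef {A B : Matrix m m ℂ} (hA : A.PosDef) (hB : B.PosDef) {w : ℝ} (h0 : 0 ≤ w)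
    (h1 : w ≤ 1) : (mix w A B).PosDef := by
  rw [mix]
  rcases h0.eq_or_lt with rfl | h0
  · simpa using hA
  rcases h1.eq_or_lt with rfl | h1
  · simpa using hB
  have a1 : (0 : ℂ) < ((1 - w : ℝ) : ℂ) := by exact_mod_cast sub_pos.2 h1
  have a2 : (0 : ℂ) < ((w : ℝ) : ℂ) := by exact_mod_cast h0
  exact (hA.smul a1).add (hB.smul a2)

lemma tr_mix (w : ℝ) (A B L R : Matrix m m ℂ) :
    (L * mix w A B * R).trace.re =
      (1 - w) * (L * A * R).trace.re + w * (L * B * R).trace.re := by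
  simp [mix, Matrix.mul_add, Matrix.add_mul]

lemma aff_mix (w s : ℝ) (K M A₀ A₁ B₀ B₁ : Matrix m m ℂ) :
    aff s K M (mix w A₀ A₁) (mix w B₀ B₁) = (1 - w) * aff s K M A₀ B₀ + w * aff s K M A₁ B₁ := by
  have h := tr_mix w B₀ B₁ ((K - M)ᴴ * (K - M)) 1
  simp only [Matrix.mul_one] at h
  rw [aff, tr_mix, h, aff, aff]
  ring

lemma par_concave {A₀ A₁ B₀ B₁ : Matrix m m ℂ} (hA₀ : A₀.PosDef) (hA₁ : A₁.PosDef)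
    (hB₀ : B₀.PosDef) (hB₁ : B₁.PosDef) {w : ℝ} (h0 : 0 ≤ w) (h1 : w ≤ 1) {s : ℝ} (hs : 0 < s)
    (K : Matrix m m ℂ) :
    (1 - w) * par hA₀.1 hB₀.1 s K + w * par hA₁.1 hB₁.1 s K ≤
      par (mix_posDef hA₀ hA₁ h0 h1).1 (mix_posDef hB₀ hB₁ h0 h1).1 s K := by
  obtain ⟨M, hM⟩ := par_attained (mix_posDef hA₀ hA₁ h0 h1) (mix_posDef hB₀ hB₁ h0 h1) hs K
  rw [← hM, aff_mix]
  have := mul_le_mul_of_nonneg_left (par_le hA₀ hB₀ hs K M) (sub_nonneg.2 h1)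
  have := mul_le_mul_of_nonneg_left (par_le hA₁ hB₁ hs K M) h0
  linarith

open MeasureTheory Set in
lemma lieb_repr {A B : Matrix m m ℂ} (hA : A.PosDef) (hB : B.PosDef) {p : ℝ}
    (hp : p ∈ Set.Ioo (0 : ℝ) 1) (K : Matrix m m ℂ) :
    IntegrableOn (fun t : ℝ => t ^ (p - 1) * par hA.1 hB.1 t⁻¹ K) (Ioi 0) ∧
    (Kᴴ * mpow A p * K * mpow B (1 - p)).trace.re =
      (∫ t in Ioi 0, Real.rpowIntegrand₀₁ p t 1)⁻¹ *
        ∫ t in Ioi (0 : ℝ), t ^ (p - 1) * par hA.1 hB.1 t⁻¹ K := by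
  have key : EqOn (fun t : ℝ => t ^ (p - 1) * par hA.1 hB.1 t⁻¹ K)
      (fun t => ∑ i, ∑ j, (hB.1.eigenvalues j * Complex.normSq (ker hA.1 hB.1 K i j)) *
        Real.rpowIntegrand₀₁ p t (hA.1.eigenvalues i / hB.1.eigenvalues j)) (Ioi 0) := by
    intro t ht
    have ht : 0 < t := ht
    simp only [par, Finset.mul_sum]
    refine Finset.sum_congr rfl fun i _ => Finset.sum_congr rfl fun j _ => ?_
    have ha := hA.eigenvalues_pos i
    have hb := hB.eigenvalues_pos j
    rw [Real.rpowIntegrand₀₁_eq_pow_div hp ht.le (by positivity)]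
    field_simp
    ring
  have hint : ∀ i j, IntegrableOn (fun t =>
      (hB.1.eigenvalues j * Complex.normSq (ker hA.1 hB.1 K i j)) *
        Real.rpowIntegrand₀₁ p t (hA.1.eigenvalues i / hB.1.eigenvalues j)) (Ioi 0) := by
    intro i j
    have ha := hA.eigenvalues_pos i
    have hb := hB.eigenvalues_pos j
    exact (Real.integrableOn_rpowIntegrand₀₁_Ioi hp (by positivity)).const_mul _
  constructor
  · rw [integrableOn_congr_fun key measurableSet_Ioi]
    exact integrable_finsetSum _ fun i _ => integrable_finsetSum _ fun j _ => hint i j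
  · rw [setIntegral_congr_fun measurableSet_Ioi key,
      integral_finsetSum _ fun i _ => integrable_finsetSum _ fun j _ => hint i j,
      mpow, mpow, trace_expand hA.1 hB.1, Finset.mul_sum]
    refine Finset.sum_congr rfl fun i _ => ?_
    rw [integral_finsetSum _ fun j _ => hint i j, Finset.mul_sum]
    refine Finset.sum_congr rfl fun j _ => ?_
    have ha := hA.eigenvalues_pos i
    have hb := hB.eigenvalues_pos j
    rw [integral_const_mul, mul_left_comm, ← Real.rpow_eq_const_mul_integral hp (by positivity),
      Real.div_rpow ha.le hb.le, Real.rpow_sub hb, Real.rpow_one]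
    ring

open MeasureTheory Set in
lemma lieb {A₀ A₁ B₀ B₁ : Matrix m m ℂ} (hA₀ : A₀.PosDef) (hA₁ : A₁.PosDef)
    (hB₀ : B₀.PosDef) (hB₁ : B₁.PosDef) {w : ℝ} (h0 : 0 ≤ w) (h1 : w ≤ 1) {p : ℝ}
    (hp : p ∈ Set.Ioo (0 : ℝ) 1) (K : Matrix m m ℂ) :
    (1 - w) * (Kᴴ * mpow A₀ p * K * mpow B₀ (1 - p)).trace.re +
      w * (Kᴴ * mpow A₁ p * K * mpow B₁ (1 - p)).trace.re ≤
      (Kᴴ * mpow (mix w A₀ A₁) p * K * mpow (mix w B₀ B₁) (1 - p)).trace.re := by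
  obtain ⟨i0, e0⟩ := lieb_repr hA₀ hB₀ hp K
  obtain ⟨i1, e1⟩ := lieb_repr hA₁ hB₁ hp K
  obtain ⟨i2, e2⟩ := lieb_repr (mix_posDef hA₀ hA₁ h0 h1) (mix_posDef hB₀ hB₁ h0 h1) hp K
  have hc := Real.integral_rpowIntegrand₀₁_one_pos hp
  rw [e0, e1, e2, mul_left_comm, mul_left_comm w, ← mul_add]
  refine mul_le_mul_of_nonneg_left ?_ (inv_nonneg.2 hc.le)
  rw [← integral_const_mul, ← integral_const_mul, ← integral_add (i0.const_mul _) (i1.const_mul _)]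
  refine setIntegral_mono_on ((i0.const_mul _).add (i1.const_mul _)) i2 measurableSet_Ioi ?_
  intro t ht
  have ht : 0 < t := ht
  have := mul_le_mul_of_nonneg_left (par_concave hA₀ hA₁ hB₀ hB₁ h0 h1 (inv_pos.2 ht) K)
    (Real.rpow_nonneg ht.le (p - 1))
  linarith

lemma conj_posDef {A : Matrix m m ℂ} (hA : A.PosDef) {K : Matrix m m ℂ} (hK : IsUnit K) :
    (Kᴴ * A * K).PosDef :=
  (Matrix.IsUnit.posDef_star_left_conjugate_iff hK).2 hA

lemma epstein {A₀ A₁ : Matrix m m ℂ} (hA₀ : A₀.PosDef) (hA₁ : A₁.PosDef)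
    {w : ℝ} (h0 : 0 ≤ w) (h1 : w ≤ 1) {p : ℝ}
    (hp0 : 0 < p) (hp1 : p ≤ 1) {K : Matrix m m ℂ} (hK : IsUnit K) :
    (1 - w) * (mpow (Kᴴ * mpow A₀ p * K) p⁻¹).trace.re +
      w * (mpow (Kᴴ * mpow A₁ p * K) p⁻¹).trace.re ≤
      (mpow (Kᴴ * mpow (mix w A₀ A₁) p * K) p⁻¹).trace.re := by
  have hm := mix_posDef hA₀ hA₁ h0 h1
  rcases hp1.eq_or_lt with rfl | hp1
  · rw [mpow_one hA₀, mpow_one hA₁, mpow_one hm, inv_one, mpow_one (conj_posDef hA₀ hK),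
      mpow_one (conj_posDef hA₁ hK), mpow_one (conj_posDef hm hK), tr_mix]
  have hX₀ := conj_posDef (mpow_posDef hA₀ p) hK
  have hX₁ := conj_posDef (mpow_posDef hA₁ p) hK
  have hXm := conj_posDef (mpow_posDef hm p) hK
  have opt : ∀ X : Matrix m m ℂ, X.PosDef →
      (X * mpow (mpow X p⁻¹) (1 - p)).trace.re =
        (mpow X p⁻¹).trace.re := by
    intro X hX
    rw [mpow_mpow hX]
    nth_rw 1 [← mpow_one hX]
    rw [mpow_mul hX]
    congr 3
    field_simp
    ring
  have hZ₀ := mpow_posDef hX₀ p⁻¹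
  have hZ₁ := mpow_posDef hX₁ p⁻¹
  have L := lieb hA₀ hA₁ hZ₀ hZ₁ h0 h1 ⟨hp0, hp1⟩ K
  have Y := young2 hXm (mix_posDef hZ₀ hZ₁ h0 h1) hp0 hp1
  rw [opt _ hX₀, opt _ hX₁] at L
  have T := tr_mix w (mpow (Kᴴ * mpow A₀ p * K) p⁻¹) (mpow (Kᴴ * mpow A₁ p * K) p⁻¹) 1 1
  simp only [Matrix.mul_one, Matrix.one_mul] at T
  rw [T] at Y
  refine le_of_mul_le_mul_left ?_ hp0
  linarith

lemma Q_bound {ρ σ K : Matrix m m ℂ} (hρ : ρ.PosDef) (hσ : σ.PosDef) (hK : IsUnit K) {α : ℝ}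
    (h0 : 0 < α) (h1 : α < 1) :
    (mpow (mpow σ ((1 - α) / (2 * α)) * ρ * mpow σ ((1 - α) / (2 * α))) α).trace.re ≤
      α * (ρ * (K * Kᴴ)⁻¹).trace.re +
      (1 - α) * (mpow (Kᴴ * mpow σ ((1 - α) / α) * K) ((1 - α) / α)⁻¹).trace.re := by
  set γ := (1 - α) / (2 * α) with hγ
  have hS := mpow_posDef hσ γ
  have hSS : mpow σ ((1 - α) / α) = mpow σ γ * mpow σ γ := by
    rw [mpow_mul hσ, hγ]; congr 1; field_simp; ring
  rw [hSS, inv_div]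
  set S := mpow σ γ
  have hSu : IsUnit S := hS.isUnit
  have hX : (S * ρ * S).PosDef := by
    have := conj_posDef hρ hSu
    rwa [hS.1.eq] at this
  have hW : ((S * K) * (S * K)ᴴ).PosDef := by
    have := (Matrix.IsUnit.posDef_star_right_conjugate_iff (hSu.mul hK)).2
      (Matrix.PosDef.one (n := m) (R := ℂ))
    rwa [Matrix.mul_one] at this
  have Y := young1 hX hW h0 h1
  have c := trace_mfun_cycle (fun x => x ^ (α / (1 - α))) (S * K)
  have d : (S * K)ᴴ * (S * K) = Kᴴ * (S * S) * K := by
    rw [Matrix.conjTranspose_mul, hS.1.eq]; simp only [Matrix.mul_assoc]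
  have hdet : IsUnit S.det := (Matrix.isUnit_iff_isUnit_det S).1 hSu
  have e : (S * ρ * S * (S * K * (S * K)ᴴ)⁻¹).trace = (ρ * (K * Kᴴ)⁻¹).trace := by
    have : S * K * (S * K)ᴴ = S * (K * Kᴴ) * S := by
      rw [Matrix.conjTranspose_mul, hS.1.eq]; simp only [Matrix.mul_assoc]
    rw [this, Matrix.mul_inv_rev, Matrix.mul_inv_rev, ← Matrix.mul_assoc,
      Matrix.mul_nonsing_inv_cancel_right _ _ hdet, ← Matrix.mul_assoc, Matrix.trace_mul_comm,
      Matrix.mul_assoc, Matrix.nonsing_inv_mul_cancel_left _ _ hdet]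
  rw [e] at Y
  simp only [mpow] at Y ⊢
  rw [c, d] at Y
  exact Y

lemma Q_attained {ρ σ : Matrix m m ℂ} (hρ : ρ.PosDef) (hσ : σ.PosDef) {α : ℝ}
    (h0 : 0 < α) (h1 : α < 1) : ∃ K : Matrix m m ℂ, IsUnit K ∧
      α * (ρ * (K * Kᴴ)⁻¹).trace.re +
      (1 - α) * (mpow (Kᴴ * mpow σ ((1 - α) / α) * K) ((1 - α) / α)⁻¹).trace.re =
    (mpow (mpow σ ((1 - α) / (2 * α)) * ρ * mpow σ ((1 - α) / (2 * α))) α).trace.re := by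
  set γ := (1 - α) / (2 * α) with hγ
  have hS := mpow_posDef hσ γ
  have hSS : mpow σ ((1 - α) / α) = mpow σ γ * mpow σ γ := by
    rw [mpow_mul hσ, hγ]; congr 1; field_simp; ring
  rw [hSS, inv_div]
  set S := mpow σ γ
  have hSu : IsUnit S := hS.isUnit
  have hdet : IsUnit S.det := (Matrix.isUnit_iff_isUnit_det S).1 hSu
  have hX : (S * ρ * S).PosDef := by
    have := conj_posDef hρ hSu
    rwa [hS.1.eq] at this
  set X := S * ρ * S with hXdef
  have hR := mpow_posDef hX ((1 - α) / 2)
  have hRR : mpow X ((1 - α) / 2) * mpow X ((1 - α) / 2) = mpow X (1 - α) := by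
    rw [mpow_mul hX]; congr 1; ring
  set R := mpow X ((1 - α) / 2)
  have hSi : (S⁻¹)ᴴ = S⁻¹ := by rw [Matrix.conjTranspose_nonsing_inv, hS.1.eq]
  have h1' : 1 - α ≠ 0 := by linarith
  refine ⟨S⁻¹ * R, (Matrix.isUnit_nonsing_inv_iff.2 hSu).mul hR.isUnit, ?_⟩
  have e1 : (S⁻¹ * R)ᴴ * (S * S) * (S⁻¹ * R) = mpow X (1 - α) := by
    rw [Matrix.conjTranspose_mul, hR.1.eq, hSi, ← hRR]
    calc _ = R * (S⁻¹ * S) * (S * S⁻¹) * R := by simp only [Matrix.mul_assoc]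
      _ = R * R := by
        rw [Matrix.nonsing_inv_mul _ hdet, Matrix.mul_nonsing_inv _ hdet]; simp
  have e2 : (S⁻¹ * R * (S⁻¹ * R)ᴴ)⁻¹ = S * mpow X (α - 1) * S := by
    have : S⁻¹ * R * (S⁻¹ * R)ᴴ = S⁻¹ * mpow X (1 - α) * S⁻¹ := by
      rw [Matrix.conjTranspose_mul, hR.1.eq, hSi, ← hRR]; simp only [Matrix.mul_assoc]
    rw [this, Matrix.mul_inv_rev, Matrix.mul_inv_rev, Matrix.nonsing_inv_nonsing_inv _ hdet,
      ← mpow_neg_one (mpow_posDef hX _), mpow_mpow hX, ← Matrix.mul_assoc]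
    congr 3; ring
  have e3 : (ρ * (S * mpow X (α - 1) * S)).trace = (mpow X α).trace := by
    rw [← Matrix.mul_assoc, Matrix.trace_mul_comm]
    have : S * (ρ * (S * mpow X (α - 1))) = X * mpow X (α - 1) := by
      rw [hXdef]; simp only [Matrix.mul_assoc]
    rw [this]
    nth_rw 1 [← mpow_one hX]
    rw [mpow_mul hX]; congr 2; ring
  rw [e1, e2, e3, mpow_mpow hX, mul_div_cancel₀ _ h1']
  ring

end helpers

theorem Q_jointly_concave {n : ℕ} (α : ℝ) (hα0 : 1/2 ≤ α) (hα1 : α < 1)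
    (ρ₀ ρ₁ σ₀ σ₁ : Matrix (Fin n) (Fin n) ℂ)
    (hρ₀ : ρ₀.PosDef) (hρ₁ : ρ₁.PosDef) (hσ₀ : σ₀.PosDef) (hσ₁ : σ₁.PosDef)
    (t : ℝ) (ht0 : 0 ≤ t) (ht1 : t ≤ 1) :
    (1 - t) * (fun (ρ σ : Matrix (Fin n) (Fin n) ℂ) =>
      (mpow (mpow σ ((1 - α) / (2 * α)) * ρ * mpow σ ((1 - α) / (2 * α))) α).trace.re) ρ₀ σ₀ + t * (fun (ρ σ : Matrix (Fin n) (Fin n) ℂ) =>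
      (mpow (mpow σ ((1 - α) / (2 * α)) * ρ * mpow σ ((1 - α) / (2 * α))) α).trace.re) ρ₁ σ₁ ≤
      (fun (ρ σ : Matrix (Fin n) (Fin n) ℂ) =>
      (mpow (mpow σ ((1 - α) / (2 * α)) * ρ * mpow σ ((1 - α) / (2 * α))) α).trace.re)
        (((1 - t : ℝ) : ℂ) • ρ₀ + ((t : ℝ) : ℂ) • ρ₁)
        (((1 - t : ℝ) : ℂ) • σ₀ + ((t : ℝ) : ℂ) • σ₁) := by
  have hα : 0 < α := by linarith
  have hp0 : 0 < (1 - α) / α := div_pos (by linarith) hα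
  have hp1 : (1 - α) / α ≤ 1 := by rw [div_le_one hα]; linarith
  have hρ := mix_posDef hρ₀ hρ₁ ht0 ht1
  have hσ := mix_posDef hσ₀ hσ₁ ht0 ht1
  obtain ⟨K, hK, e⟩ := Q_attained hρ hσ hα hα1
  have b0 := mul_le_mul_of_nonneg_left (Q_bound hρ₀ hσ₀ hK hα hα1) (sub_nonneg.2 ht1)
  have b1 := mul_le_mul_of_nonneg_left (Q_bound hρ₁ hσ₁ hK hα hα1) ht0
  have ep := mul_le_mul_of_nonneg_left (epstein hσ₀ hσ₁ ht0 ht1 hp0 hp1 hK)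
    (sub_nonneg.2 hα1.le)
  have T := tr_mix t ρ₀ ρ₁ 1 ((K * Kᴴ)⁻¹)
  simp only [Matrix.one_mul] at T
  rw [T] at e
  refine le_trans ?_ (le_of_eq e)
  linarith
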